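/- Let f_n(q) = Σ_{k=0}^n binom(n,k)·qᵏ·(−i)^{n−k} be the n-fold ∗-power of q − i. Then lim_{n→∞} m_ℍ(f_n)/n = (1 + 2G)/π − 1/4, where G = Σ_{k=0}^∞ (−1)ᵏ/(2k+1)² is Catalan's constant. -/

import Mathlib

open MeasureTheory Quaternion

noncomputable instance : MeasurableSpace (Quaternion ℝ) := borel _
instance : BorelSpace (Quaternion ℝ) := ⟨rfl⟩
instance : Nonempty (Metric.sphere (0 : Quaternion ℝ) 1) := ⟨⟨1, by simp⟩⟩

/-- The probability Haar measure `μ` on the group `T¹(ℍ)` of unit quaternions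
(the Haar measure normalized so that the whole group has measure `1`). -/
noncomputable def muH : Measure (Metric.sphere (0 : Quaternion ℝ) 1) :=
  Measure.haarMeasure ⊤

/-- The quaternionic Mahler measure `m_ℍ(f) = ∫_{T¹(ℍ)} log |f(q)| dμ(q)`. -/
noncomputable def mahlerH (f : Quaternion ℝ → Quaternion ℝ) : ℝ :=
  ∫ q : Metric.sphere (0 : Quaternion ℝ) 1, Real.log ‖f q‖ ∂muH
/-- The standard imaginary unit `i` of the quaternions. -/
noncomputable def qI : Quaternion ℝ := ⟨0, 1, 0, 0⟩
/-- The standard imaginary unit `j` of the quaternions. -/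
noncomputable def qJ : Quaternion ℝ := ⟨0, 0, 1, 0⟩
/-- The standard imaginary unit `k` of the quaternions. -/
noncomputable def qK : Quaternion ℝ := ⟨0, 0, 0, 1⟩

/-!
The `n`-th `∗`-power of `q - a` takes at `q` the value `Lⁿ 1`, where `L w = q * w - w * a`. Left
multiplication by `q.im` commutes with right multiplication by `a.im`, so `L` is normal, with
eigenvalues of modulus `√((re q - re a)² + (‖im q‖ ± ‖im a‖)²)`. If `ρ` is the larger of these,
then `‖Lⁿ 1‖ ≤ ρⁿ`, while projecting `Lⁿ 1` onto the dominant eigenspace shows that `‖Lⁿ 1‖` is at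
least `ρⁿ` times the norm of the projection of `1`, hence at least `ρⁿ |⟪v, q⟫| / 2` for any unit
vector `v` orthogonal to `1` and `a`. As `log |⟪v, q⟫|` is integrable on the sphere, dominated
convergence gives `m(f_n) / n → ∫ log ρ`.

For an imaginary unit `a` one has `ρ² = 2 + 2 ‖im q‖`. The real part of a Haar distributed `q` is
`cos θ` with `θ` of density `(2 / π) sin² θ` on `[0, π]`, so integration by parts reduces `∫ log ρ`
to `∫ θ in 0..π, log (2 + 2 sin θ) = 4 G`, which follows from the Fourier expansion of
`log |1 - r exp (i φ)|` by Abel summation as `r → 1`.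
-/

open Filter Metric Module Real Set Topology
open scoped ENNReal RealInnerProductSpace

section StarPower

variable {R : Type*} [Ring R]

/-- The value at `q` of the `n`-th power of `q - a` for the `∗`-product of slice regular
polynomials, over an arbitrary ring. -/
def starPow (a : R) (n : ℕ) (q : R) : R :=
  ∑ k ∈ Finset.range (n + 1), (n.choose k : R) * q ^ k * (-a) ^ (n - k)

lemma starPow_eq_pow_apply_one (a : R) (n : ℕ) (q : R) :
    starPow a n q = ((LinearMap.mulLeft ℤ q - LinearMap.mulRight ℤ a) ^ n) 1 := by
  have hneg : -LinearMap.mulRight ℤ a = LinearMap.mulRight ℤ (-a) := by ext; simp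
  rw [sub_eq_add_neg, hneg, (LinearMap.commute_mulLeft_right ..).add_pow, starPow,
    LinearMap.sum_apply]
  refine Finset.sum_congr rfl fun k _ => ?_
  simp [Module.End.mul_apply, LinearMap.pow_mulLeft, LinearMap.pow_mulRight, mul_assoc,
    Nat.cast_comm]

@[simp] lemma starPow_zero (a q : R) : starPow a 0 q = 1 := by simp [starPow]

lemma starPow_succ (a : R) (n : ℕ) (q : R) :
    starPow a (n + 1) q = q * starPow a n q - starPow a n q * a := by
  simp only [starPow_eq_pow_apply_one, pow_succ', Module.End.mul_apply, LinearMap.sub_apply,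
    LinearMap.mulLeft_apply, LinearMap.mulRight_apply]

lemma continuous_starPow [TopologicalSpace R] [IsTopologicalRing R] (a : R) (n : ℕ) :
    Continuous (starPow a n) := by
  unfold starPow
  fun_prop

end StarPower

section Sylvester

lemma norm_sq_eq_re_sq_add_norm_im_sq (q : ℍ[ℝ]) : ‖q‖ ^ 2 = q.re ^ 2 + ‖q.im‖ ^ 2 := by
  simp only [sq ‖_‖, ← normSq_eq_norm_mul_self, normSq_def', re_im, imI_im, imJ_im, imK_im]
  ring

lemma im_mul_im_self (q : ℍ[ℝ]) : q.im * q.im = -((‖q.im‖ ^ 2 : ℝ) : ℍ[ℝ]) := by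
  rw [← sq, im_sq, normSq_eq_norm_mul_self, sq]

/-- The spectral radius of the Sylvester operator `w ↦ q * w - w * a`, which is also its norm. -/
noncomputable def sylvesterRadius (a q : ℍ[ℝ]) : ℝ :=
  √((q.re - a.re) ^ 2 + (‖q.im‖ + ‖a.im‖) ^ 2)

variable (a q : ℍ[ℝ])

lemma sylvesterRadius_sq :
    sylvesterRadius a q ^ 2 = (q.re - a.re) ^ 2 + (‖q.im‖ + ‖a.im‖) ^ 2 :=
  sq_sqrt (by positivity)

lemma sylvesterRadius_pos {a : ℍ[ℝ]} (ha : a.im ≠ 0) : 0 < sylvesterRadius a q :=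
  sqrt_pos.2 (by positivity)

lemma continuous_sylvesterRadius : Continuous (sylvesterRadius a) := by
  have hre : Continuous fun q : ℍ[ℝ] => q.re := continuous_re
  have him : Continuous fun q : ℍ[ℝ] => q.im := continuous_im
  unfold sylvesterRadius
  fun_prop

lemma mul_sub_mul_eq_smul_add (w : ℍ[ℝ]) :
    q * w - w * a = (q.re - a.re) • w + (q.im * w - w * a.im) := by
  nth_rw 1 [← re_add_im q, ← re_add_im a]
  rw [add_mul, mul_add, ← coe_commutes, coe_mul_eq_smul, coe_mul_eq_smul]
  module

lemma inner_im_mul_sub_mul_im (w : ℍ[ℝ]) : ⟪w, q.im * w - w * a.im⟫ = 0 := by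
  simp [inner_def]
  ring

lemma norm_mul_sub_mul_le (w : ℍ[ℝ]) : ‖q * w - w * a‖ ≤ sylvesterRadius a q * ‖w‖ := by
  have him : ‖q.im * w - w * a.im‖ ≤ (‖q.im‖ + ‖a.im‖) * ‖w‖ := by
    simpa [mul_add, mul_comm] using norm_sub_le (q.im * w) (w * a.im)
  refine le_of_sq_le_sq ?_ (by unfold sylvesterRadius; positivity)
  calc ‖q * w - w * a‖ ^ 2
      = (q.re - a.re) ^ 2 * ‖w‖ ^ 2 + ‖q.im * w - w * a.im‖ ^ 2 := by
        rw [mul_sub_mul_eq_smul_add, norm_add_sq_real, real_inner_smul_left,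
          inner_im_mul_sub_mul_im, norm_smul, mul_pow, norm_eq_abs, sq_abs]
        ring
    _ ≤ (q.re - a.re) ^ 2 * ‖w‖ ^ 2 + ((‖q.im‖ + ‖a.im‖) * ‖w‖) ^ 2 := by gcongr
    _ = (sylvesterRadius a q * ‖w‖) ^ 2 := by
        rw [mul_pow (sylvesterRadius a q), sylvesterRadius_sq]
        ring

lemma norm_starPow_le (n : ℕ) : ‖starPow a n q‖ ≤ sylvesterRadius a q ^ n := by
  induction n with
  | zero => simp
  | succ n ih =>
    rw [starPow_succ, pow_succ']
    refine (norm_mul_sub_mul_le a q _).trans ?_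
    gcongr
    exact sqrt_nonneg _

/-- A multiple of the projection of `w` onto the eigenspace of `w ↦ q * w - w * a` belonging to
the eigenvalues of largest modulus, the complex structure being right multiplication by `a.im`. -/
noncomputable def dominantPart (w : ℍ[ℝ]) : ℍ[ℝ] := ‖a.im‖ • (q.im * w) - ‖q.im‖ • (w * a.im)

/-- The quaternion by which `w ↦ q * w - w * a` acts, from the right, on its dominant
eigenspace; the division makes it junk for real `a`. -/
noncomputable def dominantFactor : ℍ[ℝ] := ↑(q.re - a.re) - (1 + ‖q.im‖ / ‖a.im‖) • a.im

lemma norm_dominantPart_le (w : ℍ[ℝ]) :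
    ‖dominantPart a q w‖ ≤ 2 * ‖q.im‖ * ‖a.im‖ * ‖w‖ := by
  refine (norm_sub_le _ _).trans_eq ?_
  simp only [norm_smul, norm_mul, norm_norm]
  ring

variable {a}

lemma norm_dominantFactor (ha : a.im ≠ 0) : ‖dominantFactor a q‖ = sylvesterRadius a q := by
  have hre : (dominantFactor a q).re = q.re - a.re := by simp [dominantFactor]
  have him : (dominantFactor a q).im = -(1 + ‖q.im‖ / ‖a.im‖) • a.im := by
    ext <;> simp [dominantFactor] <;> ring
  refine (pow_left_inj₀ (norm_nonneg _) (sylvesterRadius_pos q ha).le two_ne_zero).1 ?_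
  rw [norm_sq_eq_re_sq_add_norm_im_sq, sylvesterRadius_sq, hre, him, norm_smul, norm_neg,
    norm_of_nonneg (by positivity)]
  have := norm_ne_zero_iff.2 ha
  field_simp
  ring

lemma im_mul_dominantPart (ha : a.im ≠ 0) (w : ℍ[ℝ]) :
    q.im * dominantPart a q w = -(‖q.im‖ / ‖a.im‖) • (dominantPart a q w * a.im) := by
  have := norm_ne_zero_iff.2 ha
  simp only [dominantPart, mul_sub, sub_mul, mul_smul_comm, smul_mul_assoc, ← mul_assoc,
    im_mul_im_self q]
  simp only [mul_assoc, im_mul_im_self a, neg_mul, mul_neg, coe_mul_eq_smul, mul_coe_eq_smul]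
  match_scalars <;> field_simp

lemma dominantPart_mul_sub_mul (ha : a.im ≠ 0) (w : ℍ[ℝ]) :
    dominantPart a q (q * w - w * a) = dominantPart a q w * dominantFactor a q := by
  have hcomm : dominantPart a q (q * w - w * a) =
      q * dominantPart a q w - dominantPart a q w * a := by
    rw [mul_sub_mul_eq_smul_add a q w, mul_sub_mul_eq_smul_add a q (dominantPart a q w)]
    simp only [dominantPart, mul_add, add_mul, mul_sub, sub_mul, mul_smul_comm, smul_mul_assoc,
      mul_assoc]
    module
  rw [hcomm, mul_sub_mul_eq_smul_add, im_mul_dominantPart q ha, dominantFactor, mul_sub,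
    mul_coe_eq_smul, mul_smul_comm]
  match_scalars
  all_goals simp
  ring

lemma dominantPart_starPow (ha : a.im ≠ 0) (n : ℕ) :
    dominantPart a q (starPow a n q) = dominantPart a q 1 * dominantFactor a q ^ n := by
  induction n with
  | zero => simp
  | succ n ih => rw [starPow_succ, dominantPart_mul_sub_mul q ha, ih, mul_assoc, pow_succ]

lemma inner_dominantPart_one {v : ℍ[ℝ]} (hv : ⟪v, 1⟫ = 0) (hva : ⟪v, a⟫ = 0) :
    ⟪v, dominantPart a q 1⟫ = ‖a.im‖ * ⟪v, q⟫ := by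
  have him (p : ℍ[ℝ]) : ⟪v, p.im⟫ = ⟪v, p⟫ := by
    nth_rw 2 [← re_add_im p]
    rw [inner_add_right, ← mul_one (p.re : ℍ[ℝ]), coe_mul_eq_smul, inner_smul_right, hv]
    simp
  simp [dominantPart, inner_sub_right, inner_smul_right, him, hva]

lemma abs_inner_mul_sylvesterRadius_pow_le {v : ℍ[ℝ]} (hv : ‖v‖ = 1) (hv1 : ⟪v, 1⟫ = 0)
    (ha : a.im ≠ 0) (hva : ⟪v, a⟫ = 0) (n : ℕ) :
    |⟪v, q⟫| * sylvesterRadius a q ^ n ≤ 2 * ‖q.im‖ * ‖starPow a n q‖ := by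
  refine le_of_mul_le_mul_left ?_ (norm_pos_iff.2 ha)
  calc ‖a.im‖ * (|⟪v, q⟫| * sylvesterRadius a q ^ n)
      = |⟪v, dominantPart a q 1⟫| * ‖dominantFactor a q‖ ^ n := by
        rw [inner_dominantPart_one q hv1 hva, abs_mul, abs_norm, norm_dominantFactor q ha,
          mul_assoc]
    _ ≤ ‖dominantPart a q 1‖ * ‖dominantFactor a q‖ ^ n := by
        gcongr
        simpa [hv] using abs_real_inner_le_norm v (dominantPart a q 1)
    _ = ‖dominantPart a q (starPow a n q)‖ := by
        rw [dominantPart_starPow q ha, norm_mul, norm_pow]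
    _ ≤ 2 * ‖q.im‖ * ‖a.im‖ * ‖starPow a n q‖ := norm_dominantPart_le ..
    _ = ‖a.im‖ * (2 * ‖q.im‖ * ‖starPow a n q‖) := by ring

variable {q}

lemma abs_log_norm_starPow_sub_le {v : ℍ[ℝ]} (hv : ‖v‖ = 1) (hv1 : ⟪v, 1⟫ = 0)
    (ha : a.im ≠ 0) (hva : ⟪v, a⟫ = 0) (hq : ‖q‖ = 1) (hvq : ⟪v, q⟫ ≠ 0) (n : ℕ) :
    |log ‖starPow a n q‖ - n * log (sylvesterRadius a q)| ≤ log 2 - log ⟪v, q⟫ := by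
  have hρ : 0 < sylvesterRadius a q ^ n := pow_pos (sylvesterRadius_pos q ha) n
  have hinner : |⟪v, q⟫| ≤ 1 := by simpa [hv, hq] using abs_real_inner_le_norm v q
  have him : ‖q.im‖ ≤ 1 := by
    nlinarith [norm_sq_eq_re_sq_add_norm_im_sq q, sq_nonneg q.re]
  have hlower : |⟪v, q⟫| * sylvesterRadius a q ^ n ≤ 2 * ‖starPow a n q‖ :=
    (abs_inner_mul_sylvesterRadius_pow_le q hv hv1 ha hva n).trans (by gcongr; linarith)
  have hpos : 0 < ‖starPow a n q‖ := by
    have : 0 < |⟪v, q⟫| * sylvesterRadius a q ^ n := by positivity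
    linarith
  have hlog_upper := log_le_log hpos (norm_starPow_le a q n)
  have hlog_lower := log_le_log (by positivity) hlower
  rw [log_mul (by positivity) hρ.ne', log_mul two_ne_zero hpos.ne', log_abs, log_pow]
    at hlog_lower
  rw [log_pow] at hlog_upper
  have hlog_inner : log ⟪v, q⟫ ≤ 0 := by
    rw [← log_abs]; exact log_nonpos (abs_nonneg _) hinner
  rw [abs_le]
  constructor <;> linarith [log_pos one_lt_two, hlog_inner]

end Sylvester

section PolarCoordinates

lemma setLIntegral_upperHalfPlane_eq_polarCoord (f : ℝ × ℝ → ℝ≥0∞) :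
    ∫⁻ p in univ ×ˢ Ioi (0 : ℝ), f p =
      ∫⁻ p in Ioi (0 : ℝ) ×ˢ Ioo 0 π, .ofReal p.1 * f (p.1 * cos p.2, p.1 * sin p.2) := by
  have hmem {p : ℝ × ℝ} (hp : p ∈ Ioi (0 : ℝ) ×ˢ Ioo (-π) π) :
      polarCoord.symm p ∈ (univ ×ˢ Ioi 0 : Set (ℝ × ℝ)) ↔ p ∈ Ioi (0 : ℝ) ×ˢ Ioo 0 π := by
    obtain ⟨hr : 0 < p.1, hθ⟩ := hp
    have hsin : 0 < sin p.2 ↔ 0 < p.2 :=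
      ⟨fun h => not_le.1 fun h0 => h.not_ge (sin_nonpos_of_nonpos_of_neg_pi_le h0 hθ.1.le),
        fun h => sin_pos_of_pos_of_lt_pi h hθ.2⟩
    simp [hr, hsin, hθ.2]
  rw [← lintegral_indicator (MeasurableSet.univ.prod measurableSet_Ioi),
    ← lintegral_comp_polarCoord_symm, polarCoord_target,
    setLIntegral_congr_fun (g := (Ioi (0 : ℝ) ×ˢ Ioo 0 π).indicator fun p =>
      .ofReal p.1 * f (p.1 * cos p.2, p.1 * sin p.2)) (measurableSet_Ioi.prod measurableSet_Ioo)
      fun p hp => ?_,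
    setLIntegral_indicator (measurableSet_Ioi.prod measurableSet_Ioo), inter_eq_left.2]
  · exact prod_mono_right (Ioo_subset_Ioo_left (by linarith [pi_pos]))
  · by_cases h : p ∈ Ioi (0 : ℝ) ×ˢ Ioo 0 π
    · rw [indicator_of_mem h, indicator_of_mem ((hmem hp).2 h), polarCoord_symm_apply, smul_eq_mul]
    · rw [indicator_of_notMem h, indicator_of_notMem (mt (hmem hp).1 h), smul_zero]

lemma exists_measurable_lintegral_ofReal_pow_mul_eq_one (n : ℕ) :
    ∃ h : ℝ → ℝ≥0∞, Measurable h ∧ ∫⁻ r in Ioi (0 : ℝ), .ofReal (r ^ n) * h r = 1 := by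
  refine ⟨(Ioo 0 1).indicator fun r => (.ofReal (r ^ n))⁻¹,
    Measurable.indicator (by fun_prop) measurableSet_Ioo, ?_⟩
  calc ∫⁻ r in Ioi (0 : ℝ), .ofReal (r ^ n) * (Ioo 0 1).indicator (fun r => (.ofReal (r ^ n))⁻¹) r
      = ∫⁻ r in Ioi (0 : ℝ), (Ioo 0 1).indicator 1 r := by
        refine setLIntegral_congr_fun measurableSet_Ioi fun r (hr : 0 < r) => ?_
        by_cases h1 : r < 1
        · simp [hr, h1, ENNReal.mul_inv_cancel]
        · simp [h1]
    _ = 1 := by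
        rw [setLIntegral_indicator measurableSet_Ioo,
          inter_eq_left.2 Ioo_subset_Ioi_self]
        simp

variable {E : Type*} [NormedAddCommGroup E] [NormedSpace ℝ E] [FiniteDimensional ℝ E]
  [Nontrivial E] [MeasurableSpace E] [BorelSpace E] (μ : Measure E) [μ.IsAddHaarMeasure]

lemma lintegral_norm_inv_smul_mul_norm {F : E → ℝ≥0∞} (hF : Measurable F) {h : ℝ → ℝ≥0∞}
    (hh : Measurable h) :
    ∫⁻ x, F (‖x‖⁻¹ • x) * h ‖x‖ ∂μ =
      (∫⁻ x, F x ∂μ.toSphere) * ∫⁻ r in Ioi (0 : ℝ), .ofReal (r ^ (finrank ℝ E - 1)) * h r := by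
  have hF' : Measurable fun x : sphere (0 : E) 1 => F x := by fun_prop
  have hh' : Measurable fun r : Ioi (0 : ℝ) => h r := by fun_prop
  calc ∫⁻ x, F (‖x‖⁻¹ • x) * h ‖x‖ ∂μ
      = ∫⁻ x : ({0}ᶜ : Set E), F (‖x.1‖⁻¹ • x.1) * h ‖x.1‖ ∂(μ.comap (↑)) := by
        rw [lintegral_subtype_comap (measurableSet_singleton _).compl
          fun x => F (‖x‖⁻¹ • x) * h ‖x‖, restrict_compl_singleton]
    _ = ∫⁻ p : sphere (0 : E) 1 × Ioi (0 : ℝ), F p.1 * h p.2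
          ∂μ.toSphere.prod (Measure.volumeIoiPow (finrank ℝ E - 1)) := by
        simpa using μ.measurePreserving_homeomorphUnitSphereProd.lintegral_comp_emb
          (Homeomorph.measurableEmbedding _)
          (fun p : sphere (0 : E) 1 × Ioi (0 : ℝ) => F p.1 * h p.2)
    _ = (∫⁻ x, F x ∂μ.toSphere) *
          ∫⁻ r in Ioi (0 : ℝ), .ofReal (r ^ (finrank ℝ E - 1)) * h r := by
        rw [lintegral_prod_mul hF'.aemeasurable hh'.aemeasurable, Measure.volumeIoiPow,
          lintegral_withDensity_eq_lintegral_mul _ (by fun_prop) hh',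
          ← lintegral_subtype_comap measurableSet_Ioi]
        simp

lemma lintegral_fun_norm_addHaar {h : ℝ → ℝ≥0∞} (hh : Measurable h) :
    ∫⁻ x, h ‖x‖ ∂μ =
      μ.toSphere univ * ∫⁻ r in Ioi (0 : ℝ), .ofReal (r ^ (finrank ℝ E - 1)) * h r := by
  simpa using lintegral_norm_inv_smul_mul_norm μ (F := fun _ => 1) measurable_const hh

end PolarCoordinates

section SphereLaw

variable {E : Type*} [NormedAddCommGroup E] [InnerProductSpace ℝ E] [FiniteDimensional ℝ E]
  [MeasurableSpace E] [BorelSpace E]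

lemma lintegral_inner_norm_eq_lintegral_euclideanSpace {n : ℕ} (hn : finrank ℝ E = n + 1) {e : E}
    (he : ‖e‖ = 1) {g : ℝ × ℝ → ℝ≥0∞} (hg : Measurable g) :
    ∫⁻ x : E, g (⟪e, x⟫, ‖x‖) =
      ∫⁻ t : ℝ, ∫⁻ v : EuclideanSpace ℝ (Fin n), g (t, √(t ^ 2 + ‖v‖ ^ 2)) := by
  obtain ⟨b, hb⟩ := Orthonormal.exists_orthonormalBasis_extension_of_card_eq
    (𝕜 := ℝ) (E := E) (ι := Fin (n + 1)) (by simpa using hn) (v := fun _ => e) (s := {0})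
    ⟨fun _ => he, fun i j hij => (hij (Subsingleton.elim i j)).elim⟩
  have hb0 : b 0 = e := hb 0 rfl
  have hcoord := ((MeasurePreserving.id (volume : Measure ℝ)).prod
      (PiLp.volume_preserving_toLp (Fin n))).comp
    ((volume_preserving_piFinSuccAbove (fun _ : Fin (n + 1) => ℝ) 0).comp
      ((PiLp.volume_preserving_ofLp (Fin (n + 1))).comp b.repr.measurePreserving))
  have hgm : Measurable fun p : ℝ × EuclideanSpace ℝ (Fin n) =>
    g (p.1, √(p.1 ^ 2 + ‖p.2‖ ^ 2)) := by fun_prop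
  rw [← lintegral_prod _ hgm.aemeasurable, ← hcoord.lintegral_comp hgm]
  refine lintegral_congr fun x => ?_
  have hnorm : ‖x‖ ^ 2 = b.repr x 0 ^ 2 + ∑ i : Fin n, b.repr x i.succ ^ 2 := by
    rw [← b.repr.norm_map, EuclideanSpace.norm_sq_eq, Fin.sum_univ_succ]
    simp
  have hfst : ⟪e, x⟫ = b.repr x 0 := by rw [b.repr_apply_apply, hb0]
  rw [hfst, ← sqrt_sq (norm_nonneg x), hnorm]
  simp [MeasurableEquiv.piFinSuccAbove, Fin.insertNthEquiv, EuclideanSpace.norm_sq_eq, Fin.tail]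

variable {d : ℕ} (hd : finrank ℝ E = d + 2) {e : E} (he : ‖e‖ = 1)
include hd he

lemma lintegral_inner_norm {g : ℝ × ℝ → ℝ≥0∞} (hg : Measurable g) :
    ∫⁻ x : E, g (⟪e, x⟫, ‖x‖) =
      (volume : Measure (EuclideanSpace ℝ (Fin (d + 1)))).toSphere univ *
        ∫⁻ p in Ioi (0 : ℝ) ×ˢ Ioo 0 π,
          .ofReal (p.1 ^ (d + 1) * sin p.2 ^ d) * g (p.1 * cos p.2, p.1) := by
  set σ := (volume : Measure (EuclideanSpace ℝ (Fin (d + 1)))).toSphere univ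
  set H : ℝ × ℝ → ℝ≥0∞ := fun p => .ofReal (p.2 ^ d) * g (p.1, √(p.1 ^ 2 + p.2 ^ 2))
  have hH : Measurable H := by fun_prop
  calc ∫⁻ x : E, g (⟪e, x⟫, ‖x‖)
      = ∫⁻ t : ℝ, σ * ∫⁻ r in Ioi (0 : ℝ), H (t, r) := by
        rw [lintegral_inner_norm_eq_lintegral_euclideanSpace hd he hg]
        refine lintegral_congr fun t => ?_
        rw [lintegral_fun_norm_addHaar volume (h := fun r => g (t, √(t ^ 2 + r ^ 2))) (by fun_prop),
          finrank_euclideanSpace_fin, Nat.add_sub_cancel]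
    _ = σ * ∫⁻ p in univ ×ˢ Ioi (0 : ℝ), H p := by
        rw [lintegral_const_mul _ hH.lintegral_prod_right', Measure.volume_eq_prod,
          ← Measure.prod_restrict, Measure.restrict_univ, lintegral_prod _ hH.aemeasurable]
    _ = _ := by
        rw [setLIntegral_upperHalfPlane_eq_polarCoord]
        congr 1
        refine setLIntegral_congr_fun (measurableSet_Ioi.prod measurableSet_Ioo) ?_
        rintro ⟨r, θ⟩ ⟨hr : 0 < r, -⟩
        have hsqrt : √((r * cos θ) ^ 2 + (r * sin θ) ^ 2) = r := by
          rw [mul_pow, mul_pow, ← mul_add, cos_sq_add_sin_sq, mul_one, sqrt_sq hr.le]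
        simp only [H, hsqrt]
        rw [← mul_assoc, ← ENNReal.ofReal_mul hr.le]
        ring_nf

lemma lintegral_inner_toSphere {F : ℝ → ℝ≥0∞} (hF : Measurable F) :
    ∫⁻ x : sphere (0 : E) 1, F ⟪e, x⟫ ∂(volume : Measure E).toSphere =
      (volume : Measure (EuclideanSpace ℝ (Fin (d + 1)))).toSphere univ *
        ∫⁻ θ in Ioo 0 π, .ofReal (sin θ ^ d) * F (cos θ) := by
  have : Nontrivial E := nontrivial_of_finrank_pos (R := ℝ) (by omega)
  have hd_sub : finrank ℝ E - 1 = d + 1 := by omega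
  set σ := (volume : Measure (EuclideanSpace ℝ (Fin (d + 1)))).toSphere univ
  obtain ⟨h, hh, hint⟩ := exists_measurable_lintegral_ofReal_pow_mul_eq_one (d + 1)
  calc ∫⁻ x : sphere (0 : E) 1, F ⟪e, x⟫ ∂(volume : Measure E).toSphere
      = ∫⁻ x : E, F ⟪e, ‖x‖⁻¹ • x⟫ * h ‖x‖ := by
        rw [lintegral_norm_inv_smul_mul_norm volume (F := fun x => F ⟪e, x⟫) (by fun_prop) hh,
          hd_sub, hint, mul_one]
    _ = σ * ∫⁻ p in Ioi (0 : ℝ) ×ˢ Ioo 0 π,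
          (.ofReal (p.1 ^ (d + 1)) * h p.1) * (.ofReal (sin p.2 ^ d) * F (cos p.2)) := by
        simp_rw [real_inner_smul_right]
        rw [lintegral_inner_norm hd he (g := fun p => F (p.2⁻¹ * p.1) * h p.2) (by fun_prop)]
        congr 1
        refine setLIntegral_congr_fun (measurableSet_Ioi.prod measurableSet_Ioo) ?_
        rintro ⟨r, θ⟩ ⟨hr : 0 < r, -⟩
        simp only [inv_mul_cancel_left₀ hr.ne', ENNReal.ofReal_mul (pow_nonneg hr.le (d + 1))]
        ring
    _ = σ * ∫⁻ θ in Ioo 0 π, .ofReal (sin θ ^ d) * F (cos θ) := by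
        rw [Measure.volume_eq_prod, ← Measure.prod_restrict,
          lintegral_prod_mul (f := fun r => .ofReal (r ^ (d + 1)) * h r)
            (g := fun θ => .ofReal (sin θ ^ d) * F (cos θ)) (by fun_prop) (by fun_prop),
          hint, one_mul]

end SphereLaw

section Invariance

open scoped Pointwise in
lemma measurePreserving_toSphere {E F : Type*} [NormedAddCommGroup E] [NormedSpace ℝ E]
    [MeasurableSpace E] [BorelSpace E] [NormedAddCommGroup F] [NormedSpace ℝ F]
    [MeasurableSpace F] [BorelSpace F] {μ : Measure E} {ν : Measure F} (f : E ≃ₗᵢ[ℝ] F)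
    (hf : MeasurePreserving f μ ν) {g : sphere (0 : E) 1 → sphere (0 : F) 1}
    (hg : ∀ x, (g x : F) = f x) :
    MeasurePreserving g μ.toSphere ν.toSphere := by
  have hgm : Measurable g := by
    refine Measurable.subtype_mk (f := fun x => (g x : F)) ?_
    simp_rw [hg]
    exact f.continuous.measurable.comp measurable_subtype_coe
  refine ⟨hgm, Measure.ext fun s hs => ?_⟩
  have hpre : Ioo (0 : ℝ) 1 • ((↑) '' (g ⁻¹' s) : Set E) = f ⁻¹' (Ioo (0 : ℝ) 1 • ((↑) '' s)) := by
    ext x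
    constructor
    · rintro ⟨r, hr, _, ⟨x, hx, rfl⟩, rfl⟩
      exact ⟨r, hr, _, ⟨_, hx, rfl⟩, by simp [hg]⟩
    · rintro ⟨r, hr, _, ⟨y, hy, rfl⟩, hxy : r • (y : F) = f x⟩
      have hy' : f.symm y ∈ sphere (0 : E) 1 := by simp
      have hgy : g ⟨f.symm y, hy'⟩ = y := Subtype.ext (by simp [hg])
      exact ⟨r, hr, _, ⟨⟨_, hy'⟩, by rwa [mem_preimage, hgy], rfl⟩, f.injective (by simp [← hxy])⟩
  rw [Measure.map_apply hgm hs, Measure.toSphere_apply' _ (hgm hs), Measure.toSphere_apply' _ hs,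
    hpre, hf.measure_preimage_emb f.toHomeomorph.measurableEmbedding, f.toLinearEquiv.finrank_eq]

instance : (volume : Measure ℍ[ℝ]).toSphere.IsMulLeftInvariant where
  map_mul_left_eq_self g :=
    let mulLeftIsometry : ℍ[ℝ] →ₗᵢ[ℝ] ℍ[ℝ] :=
      { toLinearMap := LinearMap.mulLeft ℝ (g : ℍ[ℝ])
        norm_map' := fun q => by simp }
    let f := mulLeftIsometry.toLinearIsometryEquiv rfl
    (measurePreserving_toSphere f f.measurePreserving fun _ => rfl).map_eq

lemma toSphere_volume_eq_smul_muH :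
    (volume : Measure ℍ[ℝ]).toSphere = (volume : Measure ℍ[ℝ]).toSphere univ • muH := by
  simpa [muH] using Measure.haarMeasure_unique (volume : Measure ℍ[ℝ]).toSphere ⊤

instance : IsProbabilityMeasure muH :=
  ⟨by simpa [muH] using Measure.haarMeasure_self (G := sphere (0 : ℍ[ℝ]) 1) (K₀ := ⊤)⟩

end Invariance

section InnerLaw

variable {e : ℍ[ℝ]} (he : ‖e‖ = 1)
include he

lemma lintegral_inner_muH {F : ℝ → ℝ≥0∞} (hF : Measurable F) :
    ∫⁻ q : sphere (0 : ℍ[ℝ]) 1, F ⟪e, q⟫ ∂muH =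
      .ofReal (2 / π) * ∫⁻ θ in Ioo 0 π, .ofReal (sin θ ^ 2) * F (cos θ) := by
  set σ := (volume : Measure ℍ[ℝ]).toSphere
  have hσ0 : σ univ ≠ 0 := Measure.measure_univ_ne_zero.2 (Measure.toSphere_ne_zero _)
  have hsin : ∫⁻ θ in Ioo 0 π, .ofReal (sin θ ^ 2) = ENNReal.ofReal (π / 2) := by
    rw [restrict_Ioo_eq_restrict_Ioc, ← ofReal_integral_eq_lintegral_ofReal
      (Continuous.intervalIntegrable (by fun_prop) 0 π).1 (ae_of_all _ fun θ => sq_nonneg _),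
      ← intervalIntegral.integral_of_le pi_pos.le, integral_sin_sq]
    simp
  have hlaw {F : ℝ → ℝ≥0∞} (hF : Measurable F) :=
    lintegral_inner_toSphere (d := 2) Quaternion.finrank_eq_four he hF
  have htotal := hlaw (F := 1) measurable_one
  have hF' := hlaw hF
  simp only [Pi.one_apply, lintegral_const, one_mul, mul_one, hsin] at htotal
  have hcancel : ENNReal.ofReal (π / 2) * .ofReal (2 / π) = 1 := by
    rw [← ENNReal.ofReal_mul (by positivity)]
    simp [pi_ne_zero]
  rw [toSphere_volume_eq_smul_muH, lintegral_smul_measure, smul_eq_mul, htotal] at hF'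
  rw [← ENNReal.mul_right_inj hσ0 (measure_ne_top _ _), show σ univ = _ from htotal, hF',
    mul_assoc, ← mul_assoc (ENNReal.ofReal (π / 2)), hcancel, one_mul]

lemma map_inner_muH :
    muH.map (fun q : sphere (0 : ℍ[ℝ]) 1 => ⟪e, q⟫) =
      ((volume.restrict (Ioo 0 π)).withDensity fun θ => .ofReal (2 / π * sin θ ^ 2)).map cos := by
  refine Measure.ext_of_lintegral _ fun F hF => ?_
  rw [lintegral_map hF (by fun_prop), lintegral_map hF (by fun_prop), lintegral_inner_muH he hF,
    lintegral_withDensity_eq_lintegral_mul _ (by fun_prop) (by fun_prop),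
    ← lintegral_const_mul _ (by fun_prop)]
  refine lintegral_congr fun θ => ?_
  rw [Pi.mul_apply, ENNReal.ofReal_mul (by positivity), mul_assoc]

lemma integrable_inner_muH_iff {F : ℝ → ℝ} (hF : Measurable F) :
    Integrable (fun q : sphere (0 : ℍ[ℝ]) 1 => F ⟪e, q⟫) muH ↔
      IntervalIntegrable (fun θ => 2 / π * sin θ ^ 2 * F (cos θ)) volume 0 π := by
  rw [intervalIntegrable_iff_integrableOn_Ioo_of_le pi_pos.le, ← Function.comp_def F,
    ← integrable_map_measure hF.aestronglyMeasurable (by fun_prop), map_inner_muH he,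
    integrable_map_measure hF.aestronglyMeasurable (by fun_prop),
    integrable_withDensity_iff_integrable_smul' (by fun_prop) (by simp)]
  refine integrable_congr (ae_of_all _ fun θ => ?_)
  simp only [Function.comp, smul_eq_mul]
  rw [ENNReal.toReal_ofReal (by positivity)]

lemma integral_inner_muH {F : ℝ → ℝ} (hF : Measurable F) :
    ∫ q : sphere (0 : ℍ[ℝ]) 1, F ⟪e, q⟫ ∂muH = ∫ θ in 0..π, 2 / π * sin θ ^ 2 * F (cos θ) := by
  rw [← integral_map (φ := fun q : sphere (0 : ℍ[ℝ]) 1 => ⟪e, q⟫) (by fun_prop)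
    hF.aestronglyMeasurable, map_inner_muH he, integral_map (by fun_prop) hF.aestronglyMeasurable,
    integral_withDensity_eq_integral_toReal_smul (by fun_prop) (by simp),
    intervalIntegral.integral_of_le pi_pos.le, ← restrict_Ioo_eq_restrict_Ioc]
  refine integral_congr_ae (ae_of_all _ fun θ => ?_)
  simp only [smul_eq_mul]
  rw [ENNReal.toReal_ofReal (by positivity)]

lemma integrable_log_inner_muH :
    Integrable (fun q : sphere (0 : ℍ[ℝ]) 1 => log ⟪e, q⟫) muH :=
  (integrable_inner_muH_iff he measurable_log).2
    (intervalIntegrable_log_cos.continuousOn_mul (by fun_prop))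

lemma ae_inner_ne_zero_muH : ∀ᵐ q : sphere (0 : ℍ[ℝ]) 1 ∂muH, ⟪e, q⟫ ≠ 0 := by
  have hcos : {θ | cos θ = 0}.Countable := by
    refine (countable_range fun k : ℤ => (2 * k + 1) * π / 2).mono fun θ hθ => ?_
    obtain ⟨k, hk⟩ := cos_eq_zero_iff.1 hθ
    exact ⟨k, hk.symm⟩
  have hm : MeasurableSet {t : ℝ | t ≠ 0} := (measurableSet_singleton 0).compl
  refine ae_of_ae_map (f := fun q : sphere (0 : ℍ[ℝ]) 1 => ⟪e, q⟫) (p := (· ≠ 0)) (by fun_prop) ?_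
  rw [map_inner_muH he, ae_map_iff (by fun_prop) hm]
  exact (withDensity_absolutelyContinuous _ _).ae_le (ae_restrict_of_ae (hcos.ae_notMem _))

end InnerLaw

section Catalan

lemma hasSum_log_one_sub_two_mul_cos {r : ℝ} (hr : |r| < 1) (φ : ℝ) :
    HasSum (fun n : ℕ => -2 * r ^ n / n * cos (n * φ)) (log (1 - 2 * r * cos φ + r ^ 2)) := by
  set z : ℂ := r * Complex.exp (φ * Complex.I)
  have hz : ‖z‖ < 1 := by simpa [z, Complex.norm_exp_ofReal_mul_I] using hr
  have hre : z.re = r * cos φ := by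
    rw [Complex.re_ofReal_mul, Complex.exp_ofReal_mul_I_re]
  have him : z.im = r * sin φ := by
    rw [Complex.im_ofReal_mul, Complex.exp_ofReal_mul_I_im]
  have hlog : -2 * (-Complex.log (1 - z)).re = log (1 - 2 * r * cos φ + r ^ 2) := by
    rw [Complex.neg_re, Complex.log_re, neg_mul_neg, ← Nat.cast_ofNat (R := ℝ), ← log_pow,
      Complex.sq_norm, Complex.normSq_apply]
    congr 1
    simp only [Complex.sub_re, Complex.sub_im, Complex.one_re, Complex.one_im, hre, him]
    linear_combination r ^ 2 * sin_sq_add_cos_sq φ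
  rw [← hlog]
  refine ((Complex.hasSum_re (Complex.hasSum_taylorSeries_neg_log hz)).mul_left (-2)).congr_fun
    fun n => ?_
  have hterm : z ^ n / n = ((r ^ n / n : ℝ) : ℂ) * Complex.exp ((n * φ : ℝ) * Complex.I) := by
    rw [mul_pow, ← Complex.exp_nat_mul]
    push_cast
    ring_nf
  rw [hterm, Complex.re_ofReal_mul, Complex.exp_ofReal_mul_I_re]
  ring

lemma hasSum_integral_log_one_sub_two_mul_cos {r : ℝ} (hr : |r| < 1) (a b : ℝ) :
    HasSum (fun n : ℕ => -2 * (sin (n * b) - sin (n * a)) / n ^ 2 * r ^ n)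
      (∫ φ in a..b, log (1 - 2 * r * cos φ + r ^ 2)) := by
  have hbound (n : ℕ) (φ : ℝ) : ‖-2 * r ^ n / n * cos (n * φ)‖ ≤ 2 * |r| ^ n := by
    rcases n.eq_zero_or_pos with rfl | hn
    · simp
    · calc ‖-2 * r ^ n / n * cos (n * φ)‖ = 2 * |r| ^ n / n * |cos (n * φ)| := by simp
        _ ≤ 2 * |r| ^ n / 1 * 1 := by
          gcongr
          · exact_mod_cast hn
          · exact abs_cos_le_one _
        _ = 2 * |r| ^ n := by ring
  have hint (n : ℕ) : ∫ φ in a..b, -2 * r ^ n / n * cos (n * φ) =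
      -2 * (sin (n * b) - sin (n * a)) / n ^ 2 * r ^ n := by
    rcases eq_or_ne n 0 with rfl | hn
    · simp
    · rw [intervalIntegral.integral_const_mul, intervalIntegral.integral_comp_mul_left _
        (Nat.cast_ne_zero.2 hn), integral_cos, smul_eq_mul]
      ring
  simp_rw [← hint]
  exact intervalIntegral.hasSum_integral_of_dominated_convergence (fun n _ => 2 * |r| ^ n)
    (fun n => Continuous.aestronglyMeasurable (by fun_prop))
    (fun n => ae_of_all _ fun φ _ => hbound n φ)
    (ae_of_all _ fun _ _ => (summable_geometric_of_lt_one (abs_nonneg r) hr).mul_left 2)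
    intervalIntegrable_const (ae_of_all _ fun φ _ => hasSum_log_one_sub_two_mul_cos hr φ)

lemma tendsto_integral_log_one_sub_two_mul_cos {a b : ℝ} (hcos : ∀ φ ∈ uIcc a b, cos φ ≤ 0) :
    Tendsto (fun r : ℝ => ∫ φ in a..b, log (1 - 2 * r * cos φ + r ^ 2)) (𝓝[<] 1)
      (𝓝 (∫ φ in a..b, log (2 - 2 * cos φ))) := by
  refine intervalIntegral.tendsto_integral_filter_of_dominated_convergence (fun _ => log 4)
    (.of_forall fun r => Measurable.aestronglyMeasurable (by fun_prop)) ?_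
    intervalIntegrable_const (ae_of_all _ fun φ hφ => ?_)
  · filter_upwards [Ioo_mem_nhdsLT (zero_lt_one (α := ℝ))] with r ⟨hr0, hr1⟩
    refine ae_of_all _ fun φ hφ => ?_
    have hc := hcos φ (uIoc_subset_uIcc hφ)
    have h1 : 1 ≤ 1 - 2 * r * cos φ + r ^ 2 := by nlinarith
    rw [norm_of_nonneg (log_nonneg h1)]
    exact log_le_log (by linarith) (by nlinarith [neg_one_le_cos φ])
  · have hc := hcos φ (uIoc_subset_uIcc hφ)
    have hne : 1 - 2 * 1 * cos φ + 1 ^ 2 ≠ 0 := by linarith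
    have hcont : ContinuousAt (fun r : ℝ => log (1 - 2 * r * cos φ + r ^ 2)) 1 :=
      ContinuousAt.log (by fun_prop) hne
    convert hcont.tendsto.mono_left nhdsWithin_le_nhds using 3
    ring

lemma summable_sin_sub_sin_div_sq (a b : ℝ) :
    Summable fun n : ℕ => -2 * (sin (n * b) - sin (n * a)) / n ^ 2 := by
  refine .of_norm_bounded ((summable_one_div_nat_pow.2 one_lt_two).mul_left 4) fun n => ?_
  have hnum : |-2 * (sin (n * b) - sin (n * a))| ≤ 4 := by
    rw [abs_le]
    constructor <;> linarith [sin_le_one (n * b), neg_one_le_sin (n * b), sin_le_one (n * a),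
      neg_one_le_sin (n * a)]
  rw [norm_eq_abs, abs_div, abs_pow, Nat.abs_cast, mul_one_div]
  gcongr

lemma integral_log_two_sub_two_mul_cos {a b : ℝ} (hcos : ∀ φ ∈ uIcc a b, cos φ ≤ 0) :
    ∫ φ in a..b, log (2 - 2 * cos φ) = ∑' n : ℕ, -2 * (sin (n * b) - sin (n * a)) / n ^ 2 := by
  refine tendsto_nhds_unique (tendsto_integral_log_one_sub_two_mul_cos hcos) <|
    (tendsto_tsum_powerSeries_nhdsWithin_lt
      (summable_sin_sub_sin_div_sq a b).hasSum.tendsto_sum_nat).congr' ?_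
  filter_upwards [Ioo_mem_nhdsLT (neg_lt_self (zero_lt_one (α := ℝ)))] with r hr
  exact (hasSum_integral_log_one_sub_two_mul_cos (abs_lt.2 hr) a b).tsum_eq

/-- Catalan's constant `G`. -/
noncomputable def catalanConstant : ℝ := ∑' k : ℕ, (-1) ^ k / (2 * k + 1) ^ 2

lemma tsum_sin_mul_pi_div_two_div_sq : ∑' n : ℕ, sin (n * (π / 2)) / n ^ 2 = catalanConstant := by
  have hinj : Function.Injective fun k : ℕ => 2 * k + 1 := fun _ _ h => by simpa using h
  rw [catalanConstant, ← hinj.tsum_eq]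
  · refine tsum_congr fun k => ?_
    have hsin : sin ((2 * k + 1) * (π / 2)) = (-1) ^ k := by
      rw [add_one_mul, add_comm, mul_right_comm, mul_div_cancel₀ _ two_ne_zero, mul_comm,
        sin_add_nat_mul_pi, sin_pi_div_two, mul_one]
    simp [hsin]
  · intro n hn
    by_contra h
    obtain ⟨k, rfl⟩ := Nat.not_odd_iff_even.1 fun ⟨k, hk⟩ => h ⟨k, hk.symm⟩
    refine hn ?_
    simp [← mul_two, mul_assoc, mul_div_cancel₀]

lemma integral_log_two_add_two_mul_sin :
    ∫ θ in 0..π, log (2 + 2 * sin θ) = 4 * catalanConstant := by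
  have hcos φ (hφ : φ ∈ uIcc (0 + π / 2) (π + π / 2)) : cos φ ≤ 0 := by
    rw [uIcc_of_le (by linarith [pi_pos])] at hφ
    exact cos_nonpos_of_pi_div_two_le_of_le (by linarith [hφ.1]) hφ.2
  have hterm (n : ℕ) : -2 * (sin (n * (π + π / 2)) - sin (n * (0 + π / 2))) / n ^ 2 =
      4 * (sin (n * (π / 2)) / n ^ 2) := by
    have hsin : sin (n * (π + π / 2)) = -sin (n * (π / 2)) := by
      rw [← sin_nat_mul_two_pi_sub]
      ring_nf
    rw [hsin, zero_add]
    ring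
  calc ∫ θ in 0..π, log (2 + 2 * sin θ) = ∫ θ in 0..π, log (2 - 2 * cos (θ + π / 2)) := by
        simp [cos_add_pi_div_two]
    _ = ∫ φ in 0 + π / 2..π + π / 2, log (2 - 2 * cos φ) :=
        intervalIntegral.integral_comp_add_right (fun φ => log (2 - 2 * cos φ)) _
    _ = 4 * catalanConstant := by
        simp_rw [integral_log_two_sub_two_mul_cos hcos, hterm, tsum_mul_left,
          tsum_sin_mul_pi_div_two_div_sq]

end Catalan

section SineIntegral

lemma two_add_two_mul_sin_ne_zero {θ : ℝ} (hθ : θ ∈ uIcc 0 π) : 2 + 2 * sin θ ≠ 0 := by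
  rw [uIcc_of_le pi_pos.le] at hθ
  linarith [sin_nonneg_of_nonneg_of_le_pi hθ.1 hθ.2]

lemma intervalIntegrable_log_two_add_two_mul_sin :
    IntervalIntegrable (fun θ => log (2 + 2 * sin θ)) volume 0 π :=
  (ContinuousOn.log (by fun_prop) fun _ => two_add_two_mul_sin_ne_zero).intervalIntegrable

lemma integral_cos_two_mul_mul_log_two_add_two_mul_sin :
    ∫ θ in 0..π, cos (2 * θ) * log (2 + 2 * sin θ) = π / 2 - 2 := by
  have hderiv θ (hθ : θ ∈ uIcc 0 π) :
      HasDerivAt (fun θ => sin θ * cos θ * (log (2 + 2 * sin θ) - 1 / 2) + cos θ + θ / 2)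
        (cos (2 * θ) * log (2 + 2 * sin θ)) θ := by
    have hne := two_add_two_mul_sin_ne_zero hθ
    have hlog := (((hasDerivAt_sin θ).const_mul 2).const_add 2).log hne
    have hfrac : sin θ * cos θ * (2 * cos θ / (2 + 2 * sin θ)) = sin θ * (1 - sin θ) := by
      rw [mul_div_assoc', div_eq_iff hne]
      linear_combination 2 * sin θ * sin_sq_add_cos_sq θ
    refine (((((hasDerivAt_sin θ).fun_mul (hasDerivAt_cos θ)).fun_mul (hlog.sub_const (1 / 2))).add
      (hasDerivAt_cos θ)).add ((hasDerivAt_id θ).div_const 2)).congr_deriv ?_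
    rw [hfrac, cos_two_mul']
    linear_combination -(sin_sq_add_cos_sq θ) / 2
  rw [intervalIntegral.integral_eq_sub_of_hasDerivAt hderiv
    (intervalIntegrable_log_two_add_two_mul_sin.continuousOn_mul (by fun_prop))]
  simp only [sin_zero, sin_pi, cos_zero, cos_pi]
  ring

lemma integral_sin_sq_mul_log_two_add_two_mul_sin :
    ∫ θ in 0..π, sin θ ^ 2 * log (2 + 2 * sin θ) = 2 * catalanConstant + 1 - π / 4 := by
  have hlog := intervalIntegrable_log_two_add_two_mul_sin
  calc ∫ θ in 0..π, sin θ ^ 2 * log (2 + 2 * sin θ)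
      = ∫ θ in 0..π, (log (2 + 2 * sin θ) - cos (2 * θ) * log (2 + 2 * sin θ)) / 2 := by
        congr 1 with θ
        rw [sin_sq_eq_half_sub]
        ring
    _ = (4 * catalanConstant - (π / 2 - 2)) / 2 := by
        rw [intervalIntegral.integral_div,
          intervalIntegral.integral_sub hlog (hlog.continuousOn_mul (by fun_prop)),
          integral_log_two_add_two_mul_sin, integral_cos_two_mul_mul_log_two_add_two_mul_sin]
    _ = 2 * catalanConstant + 1 - π / 4 := by ring

end SineIntegral

section Asymptotics

lemma exists_norm_eq_one_forall_inner_eq_zero {E : Type*} [NormedAddCommGroup E]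
    [InnerProductSpace ℝ E] [FiniteDimensional ℝ E] {s : Finset E} (hs : s.card < finrank ℝ E) :
    ∃ v : E, ‖v‖ = 1 ∧ ∀ x ∈ s, ⟪v, x⟫ = 0 := by
  set V := Submodule.span ℝ (s : Set E)
  have hV : Vᗮ ≠ ⊥ := by
    intro hbot
    have hdim := V.finrank_add_finrank_orthogonal
    have hspan : finrank ℝ V ≤ s.card := finrank_span_finset_le_card s
    rw [hbot, finrank_bot] at hdim
    omega
  obtain ⟨w, hw, hw0⟩ := Submodule.exists_mem_ne_zero_of_ne_bot hV
  refine ⟨‖w‖⁻¹ • w, by simp [norm_smul, hw0], fun x hx => ?_⟩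
  rw [real_inner_smul_left, Submodule.inner_left_of_mem_orthogonal (Submodule.subset_span hx) hw,
    mul_zero]

lemma tendsto_integral_div_natCast {α : Type*} {m : MeasurableSpace α} {μ : Measure α}
    {f : ℕ → α → ℝ} {g h : α → ℝ} (hf : ∀ n, AEStronglyMeasurable (f n) μ) (hg : Integrable g μ)
    (hh : Integrable h μ) (hfg : ∀ n, ∀ᵐ x ∂μ, |f n x - n * g x| ≤ h x) :
    Tendsto (fun n : ℕ => (∫ x, f n x ∂μ) / n) atTop (𝓝 (∫ x, g x ∂μ)) := by
  have hdiff {x : α} {n : ℕ} (hx : |f n x - n * g x| ≤ h x) (hn : 0 < n) :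
      |f n x / n - g x| ≤ h x / n := by
    have hn' : (0 : ℝ) < n := Nat.cast_pos.2 hn
    rw [← mul_div_cancel_left₀ (g x) hn'.ne', ← sub_div, abs_div, Nat.abs_cast]
    gcongr
  simp_rw [← integral_div]
  refine tendsto_integral_filter_of_dominated_convergence (fun x => h x + |g x|)
    (.of_forall fun n => by simpa only [div_eq_mul_inv] using (hf n).mul_const _) ?_
    (hh.add hg.abs) ?_
  · filter_upwards [eventually_gt_atTop 0] with n hn
    filter_upwards [hfg n] with x hx
    have hdiv : h x / n ≤ h x :=
      div_le_self ((abs_nonneg _).trans hx) (by exact_mod_cast hn)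
    calc ‖f n x / n‖ = |(f n x / n - g x) + g x| := by rw [sub_add_cancel, norm_eq_abs]
      _ ≤ |f n x / n - g x| + |g x| := abs_add_le _ _
      _ ≤ h x + |g x| := by gcongr; exact (hdiff hx hn).trans hdiv
  · filter_upwards [ae_all_iff.2 hfg] with x hx
    refine tendsto_iff_norm_sub_tendsto_zero.2 <| squeeze_zero' (.of_forall fun _ => norm_nonneg _)
      ?_ (tendsto_const_div_atTop_nhds_zero_nat (h x))
    filter_upwards [eventually_gt_atTop 0] with n hn using hdiff (hx n) hn

lemma integrable_log_sylvesterRadius {a : ℍ[ℝ]} (ha : a.im ≠ 0) :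
    Integrable (fun q : sphere (0 : ℍ[ℝ]) 1 => log (sylvesterRadius a q)) muH :=
  (((continuous_sylvesterRadius a).comp continuous_subtype_val).log fun q =>
    (sylvesterRadius_pos q.1 ha).ne').integrable_of_hasCompactSupport (.of_compactSpace _)

lemma tendsto_mahlerH_starPow_div {a : ℍ[ℝ]} (ha : a.im ≠ 0) :
    Tendsto (fun n : ℕ => mahlerH (starPow a n) / n) atTop
      (𝓝 (∫ q : sphere (0 : ℍ[ℝ]) 1, log (sylvesterRadius a q) ∂muH)) := by
  classical
  obtain ⟨v, hv, hv0⟩ := exists_norm_eq_one_forall_inner_eq_zero (s := {1, a})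
    ((Finset.card_le_two).trans_lt (by rw [Quaternion.finrank_eq_four]; norm_num))
  refine tendsto_integral_div_natCast (h := fun q => log 2 - log ⟪v, q⟫) (fun n => ?_)
    (integrable_log_sylvesterRadius ha)
    ((integrable_const _).sub (integrable_log_inner_muH hv)) fun n => ?_
  · have := (continuous_starPow a n).measurable
    exact Measurable.aestronglyMeasurable (by fun_prop)
  · filter_upwards [ae_inner_ne_zero_muH hv] with q hq
    exact abs_log_norm_starPow_sub_le hv (hv0 1 (by simp)) ha (hv0 a (by simp)) (by simp) hq n

variable {u : ℍ[ℝ]} (hre : u.re = 0) (hu : ‖u‖ = 1)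
include hre hu

lemma norm_im_eq_one : ‖u.im‖ = 1 := by
  rw [← hu, ← re_add_im u, hre, coe_zero, zero_add, im_idem]

lemma log_sylvesterRadius_eq {q : ℍ[ℝ]} (hq : ‖q‖ = 1) :
    log (sylvesterRadius u q) = log (2 + 2 * √(1 - ⟪1, q⟫ ^ 2)) / 2 := by
  have him : q.re ^ 2 + ‖q.im‖ ^ 2 = 1 := by rw [← norm_sq_eq_re_sq_add_norm_im_sq, hq, one_pow]
  have hinner : ⟪1, q⟫ = q.re := by simp [inner_def]
  rw [sylvesterRadius, log_sqrt (by positivity), hre, norm_im_eq_one hre hu, hinner,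
    ← eq_sub_of_add_eq' him, sqrt_sq (norm_nonneg _)]
  congr 2
  linear_combination him

lemma integral_log_sylvesterRadius :
    ∫ q : sphere (0 : ℍ[ℝ]) 1, log (sylvesterRadius u q) ∂muH =
      (1 + 2 * catalanConstant) / π - 1 / 4 := by
  calc ∫ q : sphere (0 : ℍ[ℝ]) 1, log (sylvesterRadius u q) ∂muH
      = ∫ q : sphere (0 : ℍ[ℝ]) 1, log (2 + 2 * √(1 - ⟪1, (q : ℍ[ℝ])⟫ ^ 2)) / 2 ∂muH := by
        simp_rw [log_sylvesterRadius_eq hre hu (norm_eq_of_mem_sphere _)]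
    _ = ∫ θ in 0..π, 2 / π * sin θ ^ 2 * (log (2 + 2 * √(1 - cos θ ^ 2)) / 2) :=
        integral_inner_muH (F := fun t => log (2 + 2 * √(1 - t ^ 2)) / 2) norm_one (by fun_prop)
    _ = ∫ θ in 0..π, π⁻¹ * (sin θ ^ 2 * log (2 + 2 * sin θ)) := by
        refine intervalIntegral.integral_congr fun θ hθ => ?_
        rw [uIcc_of_le pi_pos.le] at hθ
        have hsqrt : √(1 - cos θ ^ 2) = sin θ := by
          rw [← sin_sq, sqrt_sq (sin_nonneg_of_nonneg_of_le_pi hθ.1 hθ.2)]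
        simp only [hsqrt]
        ring
    _ = (1 + 2 * catalanConstant) / π - 1 / 4 := by
        rw [intervalIntegral.integral_const_mul, integral_sin_sq_mul_log_two_add_two_mul_sin]
        field_simp
        ring

theorem mahlerH_star_pow_sub_i_asymptotic_general (G : ℝ)
    (hG : G = ∑' k : ℕ, (-1 : ℝ) ^ k / (2 * k + 1) ^ 2) :
    Tendsto (fun n : ℕ => mahlerH (starPow u n) / n) atTop (𝓝 ((1 + 2 * G) / π - 1 / 4)) := by
  rw [show G = catalanConstant from hG, ← integral_log_sylvesterRadius hre hu]
  exact tendsto_mahlerH_starPow_div fun h => by simpa [h] using norm_im_eq_one hre hu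

end Asymptotics

lemma norm_qI : ‖qI‖ = 1 := by
  rw [← sq_eq_sq₀ (norm_nonneg _) zero_le_one, sq, ← normSq_eq_norm_mul_self, normSq_def']
  simp [qI]

/-- asymptotics of `m_ℍ((x - i)^{∗n})/n` in terms of Catalan's constant. -/
theorem mahlerH_star_pow_sub_i_asymptotic (G : ℝ)
    (hG : G = ∑' k : ℕ, (-1 : ℝ) ^ k / (2 * k + 1) ^ 2) :
    Filter.Tendsto (fun n : ℕ =>
        mahlerH (fun q => ∑ k ∈ Finset.range (n + 1),
          (n.choose k : Quaternion ℝ) * q ^ k * (-qI) ^ (n - k)) / n)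
      Filter.atTop (nhds ((1 + 2 * G) / Real.pi - 1 / 4)) :=
  mahlerH_star_pow_sub_i_asymptotic_general rfl norm_qI G hG
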